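/- Let X₁ ⊆ ℝ^m and X₂ ⊆ ℝ^n, let x₁ ∈ X₁, x₂ ∈ X₂, and let h : X₁ → X₂ be a map that is Lipschitz with constant K and satisfies h(x₁) = x₂. Let S ⊆ ℝ^m and let dh : S → ℝ^n be a function such that for every v ∈ S there exist ε > 0 and a map γ : (0, ε) → ℝ^m with γ(t) ∈ X₁ for all t, (γ(t) − x₁)/t → v as t → 0⁺, and (h(γ(t)) − x₂)/t → dh(v) as t → 0⁺. Then dh is Lipschitz with constant K, i.e. ‖dh(v₁) − dh(v₂)‖ ≤ K‖v₁ − v₂‖ for all v₁, v₂ ∈ S. -/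

import Mathlib

open Filter Set

/-!
Along two arcs in `X₁` run with the same parameter `t`, the base points cancel from the differences
of the quotients, leaving `t⁻¹ • (γ t - δ t)` and `t⁻¹ • (h (γ t) - h (δ t))`. The Lipschitz bound
is homogeneous, so it holds between these for every small `t > 0` and survives the limit.
-/

open scoped Topology

theorem tendsto_smul_sub_of_tendsto_smul_sub_const {α M G : Type*} [AddCommGroup G]
    [TopologicalSpace G] [ContinuousSub G] [DistribSMul M G]
    {l : Filter α} {c : α → M} {f g : α → G} {x v w : G}
    (hf : Tendsto (fun t => c t • (f t - x)) l (𝓝 v))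
    (hg : Tendsto (fun t => c t • (g t - x)) l (𝓝 w)) :
    Tendsto (fun t => c t • (f t - g t)) l (𝓝 (v - w)) := by
  simpa only [← smul_sub, sub_sub_sub_cancel_right] using hf.sub hg

section NormSMul

variable {α 𝕜 E F : Type*} [SeminormedRing 𝕜]
  [SeminormedAddCommGroup E] [Module 𝕜 E] [NormSMulClass 𝕜 E]
  [SeminormedAddCommGroup F] [Module 𝕜 F] [NormSMulClass 𝕜 F]
  {l : Filter α} [l.NeBot] {c : α → 𝕜} {K : ℝ}

theorem norm_le_mul_norm_of_tendsto_smul {f : α → E} {g : α → F} {v : E} {w : F}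
    (hf : Tendsto (fun t => c t • f t) l (𝓝 v)) (hg : Tendsto (fun t => c t • g t) l (𝓝 w))
    (hfg : ∀ᶠ t in l, ‖g t‖ ≤ K * ‖f t‖) : ‖w‖ ≤ K * ‖v‖ := by
  refine le_of_tendsto_of_tendsto hg.norm (hf.norm.const_mul K) ?_
  filter_upwards [hfg] with t ht
  calc ‖c t • g t‖ = ‖c t‖ * ‖g t‖ := norm_smul _ _
    _ ≤ ‖c t‖ * (K * ‖f t‖) := by gcongr
    _ = K * ‖c t • f t‖ := by rw [norm_smul, mul_left_comm]

theorem norm_sub_le_mul_norm_sub_of_tendsto_smul_sub {X : Set E} {h : E → F}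
    (hLip : ∀ x ∈ X, ∀ y ∈ X, ‖h x - h y‖ ≤ K * ‖x - y‖)
    {γ δ : α → E} {x v₁ v₂ : E} {y w₁ w₂ : F}
    (hγX : ∀ᶠ t in l, γ t ∈ X) (hδX : ∀ᶠ t in l, δ t ∈ X)
    (hγ : Tendsto (fun t => c t • (γ t - x)) l (𝓝 v₁))
    (hδ : Tendsto (fun t => c t • (δ t - x)) l (𝓝 v₂))
    (hhγ : Tendsto (fun t => c t • (h (γ t) - y)) l (𝓝 w₁))
    (hhδ : Tendsto (fun t => c t • (h (δ t) - y)) l (𝓝 w₂)) :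
    ‖w₁ - w₂‖ ≤ K * ‖v₁ - v₂‖ := by
  refine norm_le_mul_norm_of_tendsto_smul
    (tendsto_smul_sub_of_tendsto_smul_sub_const hγ hδ)
    (tendsto_smul_sub_of_tendsto_smul_sub_const hhγ hhδ) ?_
  filter_upwards [hγX, hδX] with t hγt hδt using hLip _ hγt _ hδt

end NormSMul

theorem induced_map_lipschitz_general {E F : Type*}
    [SeminormedAddCommGroup E] [NormedSpace ℝ E] [SeminormedAddCommGroup F] [NormedSpace ℝ F]
    {X : Set E} {h : E → F} {K : ℝ} (hLip : ∀ x ∈ X, ∀ y ∈ X, ‖h x - h y‖ ≤ K * ‖x - y‖)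
    {x : E} {S : Set E} {dh : E → F}
    (hdh : ∀ v ∈ S, ∃ ε : ℝ, 0 < ε ∧ ∃ γ : ℝ → E,
      (∀ t ∈ Ioo (0 : ℝ) ε, γ t ∈ X) ∧
      Tendsto (fun t : ℝ => t⁻¹ • (γ t - x)) (𝓝[Ioo 0 ε] 0) (𝓝 v) ∧
      Tendsto (fun t : ℝ => t⁻¹ • (h (γ t) - h x)) (𝓝[Ioo 0 ε] 0) (𝓝 (dh v))) :
    ∀ v₁ ∈ S, ∀ v₂ ∈ S, ‖dh v₁ - dh v₂‖ ≤ K * ‖v₁ - v₂‖ := by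
  intro v₁ hv₁ v₂ hv₂
  obtain ⟨a, ha, γ, hγX, hγ, hhγ⟩ := hdh v₁ hv₁
  obtain ⟨b, hb, δ, hδX, hδ, hhδ⟩ := hdh v₂ hv₂
  rw [nhdsWithin_Ioo_eq_nhdsGT ha] at hγ hhγ
  rw [nhdsWithin_Ioo_eq_nhdsGT hb] at hδ hhδ
  exact norm_sub_le_mul_norm_sub_of_tendsto_smul_sub hLip
    (eventually_of_mem (Ioo_mem_nhdsGT ha) hγX) (eventually_of_mem (Ioo_mem_nhdsGT hb) hδX)
    hγ hδ hhγ hhδ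

/-- If `h : X₁ → X₂` is `K`-Lipschitz with `h x₁ = x₂`, and `dh : S → ℝⁿ` is a
function such that every `v ∈ S` is realized by an arc `γ` in `X₁` with
`(γ(t) − x₁)/t → v` and `(h(γ(t)) − x₂)/t → dh(v)` as `t → 0⁺`, then `dh` is
`K`-Lipschitz on `S`. -/
theorem induced_map_lipschitz
    {m n : ℕ}
    (X₁ : Set (EuclideanSpace ℝ (Fin m))) (X₂ : Set (EuclideanSpace ℝ (Fin n)))
    (x₁ : EuclideanSpace ℝ (Fin m)) (x₂ : EuclideanSpace ℝ (Fin n))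
    (hx₁ : x₁ ∈ X₁) (hx₂ : x₂ ∈ X₂)
    (h : EuclideanSpace ℝ (Fin m) → EuclideanSpace ℝ (Fin n))
    (hmaps : ∀ x ∈ X₁, h x ∈ X₂)
    (K : ℝ)
    (hLip : ∀ x ∈ X₁, ∀ y ∈ X₁, ‖h x - h y‖ ≤ K * ‖x - y‖)
    (hhx₁ : h x₁ = x₂)
    (S : Set (EuclideanSpace ℝ (Fin m)))
    (dh : EuclideanSpace ℝ (Fin m) → EuclideanSpace ℝ (Fin n))
    (hdh : ∀ v ∈ S, ∃ ε : ℝ, 0 < ε ∧ ∃ γ : ℝ → EuclideanSpace ℝ (Fin m),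
      (∀ t ∈ Ioo (0 : ℝ) ε, γ t ∈ X₁) ∧
      Tendsto (fun t : ℝ => t⁻¹ • (γ t - x₁)) (nhdsWithin 0 (Ioo 0 ε)) (nhds v) ∧
      Tendsto (fun t : ℝ => t⁻¹ • (h (γ t) - x₂)) (nhdsWithin 0 (Ioo 0 ε)) (nhds (dh v))) :
    ∀ v₁ ∈ S, ∀ v₂ ∈ S, ‖dh v₁ - dh v₂‖ ≤ K * ‖v₁ - v₂‖ := by
  subst hhx₁
  exact induced_map_lipschitz_general hLip hdh
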